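/- For all integers n ≥ 1 and k ≥ 0, the number of words in [k]^n avoiding both patterns 121 and 212 equals ∑_{j=0}^{k} j! · C(k,j) · C(n-1, j-1), where C(n-1, j-1) = 0 when j = 0. -/

import Mathlib

/-- A word `σ ∈ [k]^n` (encoded as `σ : Fin n → Fin k`) contains the pattern `τ`
(encoded as a list of natural numbers) if there is a strictly increasing choice of
positions on which `σ` is order-isomorphic to `τ`. -/
def WordContains {n k : ℕ} (σ : Fin n → Fin k) (τ : List ℕ) : Prop :=
  ∃ f : Fin τ.length → Fin n, StrictMono f ∧
    ∀ a b : Fin τ.length,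
      (σ (f a) < σ (f b) ↔ τ.get a < τ.get b) ∧
      (σ (f a) = σ (f b) ↔ τ.get a = τ.get b)

/-- `avoiders n k T` is the number of words in `[k]^n` that avoid every pattern in `T`,
i.e. `f_T(n,k)`. -/
noncomputable def avoiders (n k : ℕ) (T : Set (List ℕ)) : ℕ :=
  Nat.card {σ : Fin n → Fin k // ∀ τ ∈ T, ¬ WordContains σ τ}

/-- Every letter occurs in a contiguous block. -/
def GoodWord {n k : ℕ} (σ : Fin n → Fin k) : Prop :=
  ∀ a b c : Fin n, a < b → b < c → σ a = σ c → σ b = σ a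

lemma good_iff {n k : ℕ} (σ : Fin n → Fin k) :
    (∀ τ ∈ ({[1, 2, 1], [2, 1, 2]} : Set (List ℕ)), ¬ WordContains σ τ) ↔ GoodWord σ := by
  constructor
  · intro h a b c hab hbc hac
    by_contra hne
    have hmono : StrictMono (![a, b, c] : Fin 3 → Fin n) := by
      rw [Fin.strictMono_iff_lt_succ]
      intro i
      fin_cases i
      · exact hab
      · exact hbc
    rcases lt_or_gt_of_ne hne with hlt | hlt
    · refine h [2, 1, 2] (by simp) ⟨(![a, b, c] : Fin 3 → Fin n), hmono, ?_⟩
      show ∀ x y : Fin 3, _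
      intro x y
      fin_cases x <;> fin_cases y <;> simp [← hac, hlt, hne, Ne.symm hne, hlt.le]
    · refine h [1, 2, 1] (by simp) ⟨(![a, b, c] : Fin 3 → Fin n), hmono, ?_⟩
      show ∀ x y : Fin 3, _
      intro x y
      fin_cases x <;> fin_cases y <;> simp [← hac, hlt, hne, Ne.symm hne, hlt.le]
  · intro h τ hτ hc
    simp only [Set.mem_insert_iff, Set.mem_singleton_iff] at hτ
    rcases hτ with rfl | rfl
    · obtain ⟨f, hf, hfe⟩ := hc
      have h1 := h (f (0 : Fin 3)) (f (1 : Fin 3)) (f (2 : Fin 3))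
        (hf (show (0 : Fin 3) < 1 by decide)) (hf (show (1 : Fin 3) < 2 by decide))
        (((hfe (0 : Fin 3) (2 : Fin 3)).2).2 rfl)
      have h2 := ((hfe (1 : Fin 3) (0 : Fin 3)).2).1 h1
      simp at h2
    · obtain ⟨f, hf, hfe⟩ := hc
      have h1 := h (f (0 : Fin 3)) (f (1 : Fin 3)) (f (2 : Fin 3))
        (hf (show (0 : Fin 3) < 1 by decide)) (hf (show (1 : Fin 3) < 2 by decide))
        (((hfe (0 : Fin 3) (2 : Fin 3)).2).2 rfl)
      have h2 := ((hfe (1 : Fin 3) (0 : Fin 3)).2).1 h1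
      simp at h2

lemma good_cons {m k : ℕ} (a : Fin k) (w : Fin (m + 1) → Fin k) :
    GoodWord (Fin.cons a w : Fin (m + 2) → Fin k) ↔
      GoodWord w ∧ (a = w 0 ∨ a ∉ Finset.univ.image w) := by
  constructor
  · intro h
    refine ⟨fun x y z hxy hyz he => ?_, ?_⟩
    · have := h x.succ y.succ z.succ (by simpa using hxy) (by simpa using hyz) (by simpa using he)
      simpa using this
    · by_contra! hc
      obtain ⟨hne, hmem⟩ := hc
      simp only [Finset.mem_image, Finset.mem_univ, true_and] at hmem
      obtain ⟨i, hi⟩ := hmem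
      have hi0 : 0 < i := by
        rw [Fin.pos_iff_ne_zero]
        rintro rfl
        exact hne hi.symm
      have := h 0 (Fin.succ 0) i.succ (Fin.succ_pos _) (Fin.succ_lt_succ_iff.2 hi0) (by simp [hi])
      simp only [Fin.cons_succ, Fin.cons_zero] at this
      exact hne this.symm
  · rintro ⟨hw, ha⟩ x y z hxy hyz he
    obtain ⟨y, rfl⟩ := Fin.exists_succ_eq.2 (Fin.ne_zero_of_lt hxy)
    obtain ⟨z, rfl⟩ := Fin.exists_succ_eq.2 (Fin.ne_zero_of_lt hyz)
    have hyz' : y < z := by simpa using hyz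
    induction x using Fin.cases with
    | zero =>
      simp only [Fin.cons_succ, Fin.cons_zero] at he ⊢
      rcases ha with ha | ha
      · by_cases hy : y = 0
        · rw [hy, ha]
        · rw [ha]
          exact hw 0 y z (Fin.pos_iff_ne_zero.2 hy) hyz' (by rw [← ha, he])
      · exact absurd (Finset.mem_image.2 ⟨z, Finset.mem_univ _, he.symm⟩) ha
    | succ x =>
      simp only [Fin.cons_succ] at he ⊢
      exact hw x y z (by simpa using hxy) hyz' he

lemma image_cons {m k : ℕ} (a : Fin k) (w : Fin (m + 1) → Fin k) :
    Finset.univ.image (Fin.cons a w : Fin (m + 2) → Fin k) =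
      insert a (Finset.univ.image w) := by
  ext x
  simp [Fin.exists_fin_succ, eq_comm]

open Classical in
/-- Good words with exactly `j` letters. -/
noncomputable def goodSet (n k j : ℕ) : Finset (Fin n → Fin k) :=
  Finset.univ.filter fun σ => GoodWord σ ∧ (Finset.univ.image σ).card = j

open Classical in
lemma fiber_count {m k : ℕ} (w : Fin (m + 1) → Fin k) (j : ℕ) :
    (Finset.univ.filter fun a : Fin k =>
      GoodWord (Fin.cons a w : Fin (m + 2) → Fin k) ∧
      (Finset.univ.image (Fin.cons a w : Fin (m + 2) → Fin k)).card = j + 1).card =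
    (if GoodWord w ∧ (Finset.univ.image w).card = j + 1 then 1 else 0) +
    (k - j) * (if GoodWord w ∧ (Finset.univ.image w).card = j then 1 else 0) := by
  by_cases hw : GoodWord w
  swap
  · simp [good_cons, hw]
  have h0 : w 0 ∈ Finset.univ.image w := Finset.mem_image_of_mem _ (Finset.mem_univ _)
  simp only [good_cons, image_cons, hw, true_and]
  generalize Finset.univ.image w = s at *
  have key : ∀ a, ((a = w 0 ∨ a ∉ s) ∧ (insert a s).card = j + 1) ↔
      ((a = w 0 ∧ s.card = j + 1) ∨ (a ∉ s ∧ s.card = j)) := by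
    intro a
    by_cases ha : a ∈ s
    · simp [ha]
    · have : a ≠ w 0 := by rintro rfl; exact ha h0
      simp [ha, this]
  simp only [key]
  by_cases h1 : s.card = j + 1
  · have h2 : s.card ≠ j := by omega
    simp only [h1, and_true, Nat.succ_ne_self, and_false, or_false, if_true, if_false, mul_zero, add_zero]
    exact Finset.card_eq_one.2 ⟨w 0, by ext; simp⟩
  · by_cases h2 : s.card = j
    · have : (Finset.univ.filter fun a => a ∉ s) = sᶜ := by ext; simp
      simp [h2, this, Finset.card_compl]
    · simp [h1, h2]

open Classical in
lemma goodSet_rec (m k j : ℕ) :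
    (goodSet (m + 2) k (j + 1)).card =
      (goodSet (m + 1) k (j + 1)).card + (k - j) * (goodSet (m + 1) k j).card := by
  have e : (goodSet (m + 2) k (j + 1)).card = ∑ w : Fin (m + 1) → Fin k,
    (Finset.univ.filter fun a : Fin k =>
      GoodWord (Fin.cons a w : Fin (m + 2) → Fin k) ∧
      (Finset.univ.image (Fin.cons a w : Fin (m + 2) → Fin k)).card = j + 1).card := by
    simp only [goodSet, Finset.card_filter]
    rw [← (Fin.consEquiv (fun _ : Fin (m + 2) => Fin k)).sum_comp, Fintype.sum_prod_type,
      Finset.sum_comm]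
    rfl
  rw [e, Finset.sum_congr rfl fun w _ => fiber_count w j, Finset.sum_add_distrib,
    ← Finset.mul_sum]
  simp only [goodSet, Finset.card_filter]

lemma goodSet_zero (m k : ℕ) : (goodSet (m + 1) k 0).card = 0 := by
  simp [goodSet, Finset.filter_eq_empty_iff, ← Finset.nonempty_iff_ne_empty]

lemma goodSet_card (m k i : ℕ) :
    (goodSet (m + 1) k (i + 1)).card = k.descFactorial (i + 1) * m.choose i := by
  induction m generalizing i with
  | zero =>
    have hg : ∀ σ : Fin (0 + 1) → Fin k, GoodWord σ := by
      intro σ a b c hab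
      omega
    rcases i with _ | i
    · simp [goodSet, hg]
    · simp [goodSet]
  | succ m ih =>
    rw [goodSet_rec, ih]
    rcases i with _ | i
    · simp [goodSet_zero]
    · rw [ih, Nat.choose_succ_succ, Nat.descFactorial_succ k (i + 1)]
      ring

/-- f_{121,212}(n,k) = ∑_{j=0}^{k} j!·C(k,j)·C(n-1, j-1) for n ≥ 1,
where the j = 0 term is 0 (since C(n-1,-1) = 0). -/
theorem avoid_121_212_count (n k : ℕ) (hn : 1 ≤ n) :
    avoiders n k {[1, 2, 1], [2, 1, 2]} =
      ∑ j ∈ Finset.range (k + 1),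
        if 1 ≤ j then j.factorial * k.choose j * (n - 1).choose (j - 1) else 0 := by
  classical
  obtain ⟨m, rfl⟩ : ∃ m, n = m + 1 := ⟨n - 1, by omega⟩
  unfold avoiders
  simp only [good_iff]
  rw [Nat.card_eq_fintype_card, Fintype.card_subtype,
    Finset.card_eq_sum_card_fiberwise (f := fun σ => (Finset.univ.image σ).card)
      (t := Finset.range (k + 1))]
  · refine Finset.sum_congr rfl fun j _ => ?_
    have : (Finset.univ.filter fun σ : Fin (m + 1) → Fin k => GoodWord σ).filter
        (fun σ => (Finset.univ.image σ).card = j) = goodSet (m + 1) k j := by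
      ext; simp [goodSet]
    rw [this]
    rcases j with _ | i
    · simp [goodSet_zero]
    · rw [goodSet_card, Nat.descFactorial_eq_factorial_mul_choose]
      simp
  · intro σ _
    have := Finset.card_le_univ (Finset.univ.image σ)
    simp only [Fintype.card_fin] at this
    simp only [Finset.coe_range, Set.mem_Iio]
    omega
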